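/- Let g₀ be constant symmetric invertible 2×2, ε = ±1, φ : ℝ² → ℝ smooth with ρ = 1 + ε g₀^{μν} φ_{,μ} φ_{,ν} > 0, satisfying the minimal surface equation h^{αβ} φ_{,αβ} = 0. Define g_{αβ} = ρ^{-1/2} h_{αβ}. Then g satisfies the sigma model equation ∂_α [g^{αβ} g^{-1} ∂_β g] = 0, where g and g^{-1} are the 2×2 matrices with entries g_{αβ} and g^{αβ} = ρ^{1/2}(g₀^{αβ} − (ε/ρ) φ^α φ^β). -/

import Mathlib

open Matrix Real

/-- First partial derivative in direction `i`. -/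
noncomputable def pd (i : Fin 2) (f : (Fin 2 → ℝ) → ℝ) (p : Fin 2 → ℝ) : ℝ :=
  fderiv ℝ f p (Pi.single i 1)

/-- Second partial derivative. -/
noncomputable def pd2 (i j : Fin 2) (f : (Fin 2 → ℝ) → ℝ) (p : Fin 2 → ℝ) : ℝ :=
  pd i (fun q => pd j f q) p

/-- Third partial derivative. -/
noncomputable def pd3 (i j k : Fin 2) (f : (Fin 2 → ℝ) → ℝ) (p : Fin 2 → ℝ) : ℝ :=
  pd i (fun q => pd2 j k f q) p

/-- `φ^μ = g₀^{μα} φ_{,α}` (index raised with the inverse of `g₀`). -/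
noncomputable def phiUp (g₀ : Matrix (Fin 2) (Fin 2) ℝ) (φ : (Fin 2 → ℝ) → ℝ)
    (p : Fin 2 → ℝ) (μ : Fin 2) : ℝ :=
  ∑ α, g₀⁻¹ μ α * pd α φ p

/-- `ρ = 1 + ε g₀^{μν} φ_{,μ} φ_{,ν}`. -/
noncomputable def rho (g₀ : Matrix (Fin 2) (Fin 2) ℝ) (ε : ℝ) (φ : (Fin 2 → ℝ) → ℝ)
    (p : Fin 2 → ℝ) : ℝ :=
  1 + ε * ∑ μ, ∑ ν, g₀⁻¹ μ ν * pd μ φ p * pd ν φ p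

/-- Induced metric `h_{μν} = g₀_{μν} + ε φ_{,μ} φ_{,ν}` of the graph surface. -/
noncomputable def hLow (g₀ : Matrix (Fin 2) (Fin 2) ℝ) (ε : ℝ) (φ : (Fin 2 → ℝ) → ℝ)
    (p : Fin 2 → ℝ) : Matrix (Fin 2) (Fin 2) ℝ :=
  fun μ ν => g₀ μ ν + ε * pd μ φ p * pd ν φ p

/-- `h^{μν} = g₀^{μν} - (ε/ρ) φ^μ φ^ν`. -/
noncomputable def hUp (g₀ : Matrix (Fin 2) (Fin 2) ℝ) (ε : ℝ) (φ : (Fin 2 → ℝ) → ℝ)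
    (p : Fin 2 → ℝ) : Matrix (Fin 2) (Fin 2) ℝ :=
  fun μ ν => g₀⁻¹ μ ν - (ε / rho g₀ ε φ p) * phiUp g₀ φ p μ * phiUp g₀ φ p ν

/-- `λ₀ = (1/2)[φ^{αβ} φ_{,αβ} - (φ^α_{,α})²]`. -/
noncomputable def lam0 (g₀ : Matrix (Fin 2) (Fin 2) ℝ) (φ : (Fin 2 → ℝ) → ℝ)
    (p : Fin 2 → ℝ) : ℝ :=
  (1/2) * ((∑ α, ∑ β, (∑ μ, ∑ ν, g₀⁻¹ α μ * g₀⁻¹ β ν * pd2 μ ν φ p) * pd2 α β φ p)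
    - (∑ α, ∑ β, g₀⁻¹ α β * pd2 α β φ p)^2)

/-- Conformal metric `g_{αβ} = ρ^{-1/2} h_{αβ}`. -/
noncomputable def gLow (g₀ : Matrix (Fin 2) (Fin 2) ℝ) (ε : ℝ) (φ : (Fin 2 → ℝ) → ℝ)
    (p : Fin 2 → ℝ) : Matrix (Fin 2) (Fin 2) ℝ :=
  fun α β => (Real.sqrt (rho g₀ ε φ p))⁻¹ * (g₀ α β + ε * pd α φ p * pd β φ p)

/-- Inverse conformal metric `g^{αβ} = ρ^{1/2} (g₀^{αβ} - (ε/ρ) φ^α φ^β)`. -/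
noncomputable def gUp (g₀ : Matrix (Fin 2) (Fin 2) ℝ) (ε : ℝ) (φ : (Fin 2 → ℝ) → ℝ)
    (p : Fin 2 → ℝ) : Matrix (Fin 2) (Fin 2) ℝ :=
  fun α β => Real.sqrt (rho g₀ ε φ p) *
    (g₀⁻¹ α β - (ε / rho g₀ ε φ p) * phiUp g₀ φ p α * phiUp g₀ φ p β)

/-- The minimality condition `h^{αβ} φ_{,αβ} = 0` at a point. -/
noncomputable def minimalAt (g₀ : Matrix (Fin 2) (Fin 2) ℝ) (ε : ℝ) (φ : (Fin 2 → ℝ) → ℝ)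
    (p : Fin 2 → ℝ) : Prop :=
  ∑ α, ∑ β, hUp g₀ ε φ p α β * pd2 α β φ p = 0

section helpers

lemma pd_add' (i : Fin 2) {f g : (Fin 2 → ℝ) → ℝ} {p : Fin 2 → ℝ}
    (hf : DifferentiableAt ℝ f p) (hg : DifferentiableAt ℝ g p) :
    pd i (fun q => f q + g q) p = pd i f p + pd i g p := by
  simp only [pd]; rw [fderiv_fun_add hf hg]; rfl

lemma pd_sub' (i : Fin 2) {f g : (Fin 2 → ℝ) → ℝ} {p : Fin 2 → ℝ}
    (hf : DifferentiableAt ℝ f p) (hg : DifferentiableAt ℝ g p) :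
    pd i (fun q => f q - g q) p = pd i f p - pd i g p := by
  simp only [pd]; rw [fderiv_fun_sub hf hg]; rfl

lemma pd_mul' (i : Fin 2) {f g : (Fin 2 → ℝ) → ℝ} {p : Fin 2 → ℝ}
    (hf : DifferentiableAt ℝ f p) (hg : DifferentiableAt ℝ g p) :
    pd i (fun q => f q * g q) p = f p * pd i g p + g p * pd i f p := by
  simp only [pd]; rw [fderiv_fun_mul hf hg]; rfl

lemma pd_const' (i : Fin 2) (c : ℝ) (p : Fin 2 → ℝ) : pd i (fun _ => c) p = 0 := by
  simp [pd]

lemma pd_comp' (i : Fin 2) {f : (Fin 2 → ℝ) → ℝ} {F : ℝ → ℝ} {F' : ℝ} {p : Fin 2 → ℝ}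
    (hf : DifferentiableAt ℝ f p) (hF : HasDerivAt F F' (f p)) :
    pd i (fun q => F (f q)) p = F' * pd i f p := by
  have := (hF.comp_hasFDerivAt p hf.hasFDerivAt).fderiv
  have h2 : (fun q => F (f q)) = F ∘ f := rfl
  simp only [pd, h2]; rw [this]; rfl

lemma hasDerivAt_invsqrt {x : ℝ} (hx : 0 < x) :
    HasDerivAt (fun y => (√y)⁻¹) (-(1/2) * (√x ^ 3)⁻¹) x := by
  have h := (Real.hasDerivAt_sqrt hx.ne').inv (Real.sqrt_pos.2 hx).ne'
  refine h.congr_deriv ?_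
  have := (Real.sqrt_pos.2 hx).ne'
  field_simp

lemma hasDerivAt_invsqrt3 {x : ℝ} (hx : 0 < x) :
    HasDerivAt (fun y => (√y ^ 3)⁻¹) (-(3/2) * (√x ^ 5)⁻¹) x := by
  have h := ((Real.hasDerivAt_sqrt hx.ne').pow 3).inv (pow_pos (Real.sqrt_pos.2 hx) 3).ne'
  refine h.congr_deriv ?_
  have := (Real.sqrt_pos.2 hx).ne'
  simp only [Pi.pow_apply]
  field_simp
  norm_num
  ring

/-- derivative of `ρ^{-3/2} K`. -/
lemma pd_weight (i : Fin 2) {R K : (Fin 2 → ℝ) → ℝ} {p : Fin 2 → ℝ} (hR : 0 < R p)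
    (hRd : DifferentiableAt ℝ R p) (hK : DifferentiableAt ℝ K p) :
    pd i (fun q => (√(R q) ^ 3)⁻¹ * K q) p
      = (√(R p) ^ 5)⁻¹ * (R p * pd i K p - 3/2 * pd i R p * K p) := by
  have h1 := hasDerivAt_invsqrt3 hR
  have h2 : DifferentiableAt ℝ (fun q => (√(R q) ^ 3)⁻¹) p :=
    DifferentiableAt.comp (g := fun y => (√y ^ 3)⁻¹) p h1.differentiableAt hRd
  rw [pd_mul' i h2 hK, pd_comp' i hRd h1]
  have h3 := (Real.sqrt_pos.2 hR).ne'
  have h4 := Real.sq_sqrt hR.le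
  have h5 : (√(R p) ^ 3)⁻¹ = (√(R p) ^ 5)⁻¹ * R p := by
    nth_rewrite 3 [← h4]
    field_simp
  rw [h5]; ring

/-- `ρ` in coordinates. -/
def rhoP (A B C e a b : ℝ) : ℝ := 1 + e * (A * a * a + 2 * B * a * b + C * b * b)

def H00 (A B C e b : ℝ) : ℝ := A + e * (A * C - B * B) * b * b
def H01 (A B C e a b : ℝ) : ℝ := B - e * (A * C - B * B) * a * b
def H11 (A B C e a : ℝ) : ℝ := C + e * (A * C - B * B) * a * a

/-- `ρ h^{αβ}`. -/
def HH (A B C e : ℝ) (d : Fin 2 → ℝ) (α β : Fin 2) : ℝ :=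
  if α = 0 then (if β = 0 then H00 A B C e (d 1) else H01 A B C e (d 0) (d 1))
  else (if β = 0 then H01 A B C e (d 0) (d 1) else H11 A B C e (d 0))

/-- half of `∂_β ρ`. -/
def rhoD (A B C e : ℝ) (d : Fin 2 → ℝ) (S : Fin 2 → Fin 2 → ℝ) (β : Fin 2) : ℝ :=
  e * (A * d 0 * S β 0 + B * (d 0 * S β 1 + d 1 * S β 0) + C * d 1 * S β 1)

/-- `ρ^{3/2}` times the current. -/
def KK (A B C e : ℝ) (d : Fin 2 → ℝ) (S : Fin 2 → Fin 2 → ℝ) (μ ν α : Fin 2) : ℝ :=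
  ∑ β, HH A B C e d α β * ((∑ γ, HH A B C e d μ γ * (e * (S β γ * d ν + d γ * S β ν)))
    - if μ = ν then rhoD A B C e d S β else 0)

lemma HH_mul (g : Fin 2 → Fin 2 → ℝ) (A B C e : ℝ) (d : Fin 2 → ℝ)
    (h1 : A * g 0 0 + B * g 1 0 = 1) (h2 : A * g 0 1 + B * g 1 1 = 0)
    (h3 : B * g 0 0 + C * g 1 0 = 0) (h4 : B * g 0 1 + C * g 1 1 = 1) (μ ν : Fin 2) :
    ∑ γ, HH A B C e d μ γ * (g γ ν + e * d γ * d ν)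
      = if μ = ν then rhoP A B C e (d 0) (d 1) else 0 := by
  fin_cases μ <;> fin_cases ν <;>
    simp [HH, H00, H01, H11, rhoP, Fin.sum_univ_two]
  · linear_combination (1 + e * C * d 1 ^ 2 + e * B * d 0 * d 1) * h1
      - e * (A * d 0 * d 1 + B * d 1 ^ 2) * h3
  · linear_combination (1 + e * C * d 1 ^ 2 + e * B * d 0 * d 1) * h2
      - e * (A * d 0 * d 1 + B * d 1 ^ 2) * h4
  · linear_combination (1 + e * A * d 0 ^ 2 + e * B * d 0 * d 1) * h3
      - e * (C * d 0 * d 1 + B * d 0 ^ 2) * h1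
  · linear_combination (1 + e * A * d 0 ^ 2 + e * B * d 0 * d 1) * h4
      - e * (C * d 0 * d 1 + B * d 0 ^ 2) * h2

set_option maxHeartbeats 4000000 in
/-- Divergence-free property, in coordinates. -/
lemma core (A B C e : ℝ) (a b r s t : (Fin 2 → ℝ) → ℝ)
    (ha : Differentiable ℝ a) (hb : Differentiable ℝ b) (hr : Differentiable ℝ r)
    (hs : Differentiable ℝ s) (ht : Differentiable ℝ t)
    (a0 : ∀ q, pd 0 a q = r q) (a1 : ∀ q, pd 1 a q = s q)
    (b0 : ∀ q, pd 0 b q = s q) (b1 : ∀ q, pd 1 b q = t q)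
    (r1 : ∀ q, pd 1 r q = pd 0 s q) (t0 : ∀ q, pd 0 t q = pd 1 s q)
    (hR : ∀ q, 0 < rhoP A B C e (a q) (b q))
    (hN : ∀ q, H00 A B C e (b q) * r q + 2 * H01 A B C e (a q) (b q) * s q
      + H11 A B C e (a q) * t q = 0) (μ ν : Fin 2) (p : Fin 2 → ℝ) :
    pd 0 (fun q => (√(rhoP A B C e (a q) (b q)) ^ 3)⁻¹ *
      KK A B C e ![a q, b q] ![![r q, s q], ![s q, t q]] μ ν 0) p +
    pd 1 (fun q => (√(rhoP A B C e (a q) (b q)) ^ 3)⁻¹ *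
      KK A B C e ![a q, b q] ![![r q, s q], ![s q, t q]] μ ν 1) p = 0 := by
  have ha := ha p
  have hb := hb p
  have hr := hr p
  have hs := hs p
  have ht := ht p
  have hRd : DifferentiableAt ℝ (fun q => rhoP A B C e (a q) (b q)) p := by
    unfold rhoP; fun_prop
  have hh0 : DifferentiableAt ℝ (fun q => H00 A B C e (b q)) p := by
    unfold H00; fun_prop
  have hh1 : DifferentiableAt ℝ (fun q => H01 A B C e (a q) (b q)) p := by
    unfold H01; fun_prop
  have hh2 : DifferentiableAt ℝ (fun q => H11 A B C e (a q)) p := by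
    unfold H11; fun_prop
  have R0 : ∀ i, pd i (fun q => rhoP A B C e (a q) (b q)) p =
      2 * e * (A * a p * pd i a p + B * (a p * pd i b p + b p * pd i a p) + C * b p * pd i b p) := by
    intro i; unfold rhoP
    simp (disch := fun_prop) only [pd_add', pd_sub', pd_mul', pd_const']; ring
  have D0 : ∀ i, pd i (fun q => H00 A B C e (b q)) p =
      2 * e * (A * C - B * B) * b p * pd i b p := by
    intro i; unfold H00
    simp (disch := fun_prop) only [pd_add', pd_sub', pd_mul', pd_const']; ring
  have D1 : ∀ i, pd i (fun q => H01 A B C e (a q) (b q)) p =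
      - e * (A * C - B * B) * (a p * pd i b p + b p * pd i a p) := by
    intro i; unfold H01
    simp (disch := fun_prop) only [pd_add', pd_sub', pd_mul', pd_const']; ring
  have D2 : ∀ i, pd i (fun q => H11 A B C e (a q)) p =
      2 * e * (A * C - B * B) * a p * pd i a p := by
    intro i; unfold H11
    simp (disch := fun_prop) only [pd_add', pd_sub', pd_mul', pd_const']; ring
  have N : ∀ i, pd i (fun q => H00 A B C e (b q) * r q + 2 * H01 A B C e (a q) (b q) * s q
      + H11 A B C e (a q) * t q) p = 0 := by
    intro i; simp only [hN, pd_const']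
  have N0 := N 0
  have N1 := N 1
  have hNp := hN p
  simp (disch := fun_prop) only [pd_add', pd_mul', pd_const', D0, D1, D2,
    a0, a1, b0, b1, r1, t0] at N0 N1
  have key : ∀ K L : (Fin 2 → ℝ) → ℝ, DifferentiableAt ℝ K p → DifferentiableAt ℝ L p →
      (rhoP A B C e (a p) (b p) * (pd 0 K p + pd 1 L p)
        - 3 * e * ((A * a p * r p + B * (a p * s p + b p * r p) + C * b p * s p) * K p +
          (A * a p * s p + B * (a p * t p + b p * s p) + C * b p * t p) * L p) = 0) →
      pd 0 (fun q => (√(rhoP A B C e (a q) (b q)) ^ 3)⁻¹ * K q) p +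
      pd 1 (fun q => (√(rhoP A B C e (a q) (b q)) ^ 3)⁻¹ * L q) p = 0 := by
    intro K L hK hL h
    rw [pd_weight 0 (R := fun q => rhoP A B C e (a q) (b q)) (hR p) hRd hK,
      pd_weight 1 (R := fun q => rhoP A B C e (a q) (b q)) (hR p) hRd hL, R0, R0,
      a0, a1, b0, b1]
    linear_combination (√(rhoP A B C e (a p) (b p)) ^ 5)⁻¹ * h
  fin_cases μ <;> fin_cases ν <;>
    simp only [KK, HH, rhoD, Fin.sum_univ_two, Fin.zero_eta, Fin.mk_one, Fin.isValue, if_true,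
      Matrix.cons_val_zero, Matrix.cons_val_one, one_ne_zero, zero_ne_one, if_false] <;>
    (refine key _ _ (by fun_prop) (by fun_prop) ?_
     simp (disch := fun_prop) only [pd_add', pd_sub', pd_mul', pd_const', D0, D1, D2,
       a0, a1, b0, b1, r1, t0]
     clear N key D0 D1 D2 R0 hh0 hh1 hh2 hRd r1 t0 a0 a1 b0 b1 hN hR
     simp only [H00, H01, H11, rhoP] at N0 N1 hNp ⊢
     generalize pd 0 r p = x at *
     generalize pd 0 s p = y at *
     generalize pd 1 s p = z at *
     generalize pd 1 t p = w at *
     generalize a p = a at *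
     generalize b p = b at *
     generalize r p = r at *
     generalize s p = s at *
     generalize t p = t at *)
  · linear_combination (1 + e * (A * a * a + 2 * B * a * b + C * b * b)) *
      ((A*C*e^2*a*b^2 + A*e*a - B^2*e^2*a*b^2) * N0 + (-A*C*e^2*a^2*b + B^2*e^2*a^2*b - C*e*b) * N1) + (-A^2*C*e^3*a^4*t + 3*A^2*C*e^3*a^3*b*s - 2*A^2*C*e^3*a^2*b^2*r - 2*A^2*e^2*a^2*r + A*B^2*e^3*a^4*t - 3*A*B^2*e^3*a^3*b*s + 2*A*B^2*e^3*a^2*b^2*r + A*B*C*e^3*a^3*b*t - A*B*C*e^3*a*b^3*r - 3*A*B*e^2*a^2*s - A*B*e^2*a*b*r + 2*A*C^2*e^3*a^2*b^2*t - 3*A*C^2*e^3*a*b^3*s + A*C^2*e^3*b^4*r - 2*A*C*e^2*a^2*t + 2*A*C*e^2*b^2*r + A*e*r - B^3*e^3*a^3*b*t + B^3*e^3*a*b^3*r - 2*B^2*C*e^3*a^2*b^2*t + 3*B^2*C*e^3*a*b^3*s - B^2*C*e^3*b^4*r + B^2*e^2*a^2*t - B^2*e^2*b^2*r + B*C*e^2*a*b*t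 + 3*B*C*e^2*b^2*s + 2*C^2*e^2*b^2*t - C*e*t) * hNp
  · linear_combination (1 + e * (A * a * a + 2 * B * a * b + C * b * b)) *
      ((A*C*e^2*b^3 + A*e*b - B^2*e^2*b^3) * N0 + (-A*C*e^2*a*b^2 + A*e*a + B^2*e^2*a*b^2 + 2*B*e*b) * N1) + ((-2)*A^2*C*e^3*a^3*b*t + 5*A^2*C*e^3*a^2*b^2*s - 3*A^2*C*e^3*a*b^3*r - A^2*e^2*a^2*s - 3*A^2*e^2*a*b*r + 2*A*B^2*e^3*a^3*b*t - 5*A*B^2*e^3*a^2*b^2*s + 3*A*B^2*e^3*a*b^3*r - A*B*C*e^3*a^2*b^2*t + 4*A*B*C*e^3*a*b^3*s - 3*A*B*C*e^3*b^4*r - A*B*e^2*a^2*t - 8*A*B*e^2*a*b*s - 3*A*B*e^2*b^2*r + A*C^2*e^3*a*b^3*t - A*C^2*e^3*b^4*s - 5*A*C*e^2*a*b*t + A*C*e^2*b^2*s + 2*A*e*s + B^3*e^3*a^2*b^2*t - 4*B^3*e^3*a*b^3*s + 3*B^3*e^3*b^4*r - B^2*C*e^3*a*b^3*t + B^2*C*e^3*b^4*s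 - 8*B^2*e^2*b^2*s - 4*B*C*e^2*b^2*t + 2*B*e*t) * hNp
  · linear_combination (1 + e * (A * a * a + 2 * B * a * b + C * b * b)) *
      ((-A*C*e^2*a^2*b + B^2*e^2*a^2*b + 2*B*e*a + C*e*b) * N0 + (A*C*e^2*a^3 - B^2*e^2*a^3 + C*e*a) * N1) + (-A^2*C*e^3*a^4*s + A^2*C*e^3*a^3*b*r + A*B^2*e^3*a^4*s - A*B^2*e^3*a^3*b*r - 3*A*B*C*e^3*a^4*t + 4*A*B*C*e^3*a^3*b*s - A*B*C*e^3*a^2*b^2*r - 4*A*B*e^2*a^2*r - 3*A*C^2*e^3*a^3*b*t + 5*A*C^2*e^3*a^2*b^2*s - 2*A*C^2*e^3*a*b^3*r + A*C*e^2*a^2*s - 5*A*C*e^2*a*b*r + 3*B^3*e^3*a^4*t - 4*B^3*e^3*a^3*b*s + B^3*e^3*a^2*b^2*r + 3*B^2*C*e^3*a^3*b*t - 5*B^2*C*e^3*a^2*b^2*s + 2*B^2*C*e^3*a*b^3*r - 8*B^2*e^2*a^2*s - 3*B*C*e^2*a^2*t - 8*B*C*e^2*a*b*s - B*C*e^2*b^2*r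 + 2*B*e*r - 3*C^2*e^2*a*b*t - C^2*e^2*b^2*s + 2*C*e*s) * hNp
  · linear_combination (1 + e * (A * a * a + 2 * B * a * b + C * b * b)) *
      ((-A*C*e^2*a*b^2 - A*e*a + B^2*e^2*a*b^2) * N0 + (A*C*e^2*a^2*b - B^2*e^2*a^2*b + C*e*b) * N1) + (A^2*C*e^3*a^4*t - 3*A^2*C*e^3*a^3*b*s + 2*A^2*C*e^3*a^2*b^2*r + 2*A^2*e^2*a^2*r - A*B^2*e^3*a^4*t + 3*A*B^2*e^3*a^3*b*s - 2*A*B^2*e^3*a^2*b^2*r - A*B*C*e^3*a^3*b*t + A*B*C*e^3*a*b^3*r + 3*A*B*e^2*a^2*s + A*B*e^2*a*b*r - 2*A*C^2*e^3*a^2*b^2*t + 3*A*C^2*e^3*a*b^3*s - A*C^2*e^3*b^4*r + 2*A*C*e^2*a^2*t - 2*A*C*e^2*b^2*r - A*e*r + B^3*e^3*a^3*b*t - B^3*e^3*a*b^3*r + 2*B^2*C*e^3*a^2*b^2*t - 3*B^2*C*e^3*a*b^3*s + B^2*C*e^3*b^4*r - B^2*e^2*a^2*t + B^2*e^2*b^2*r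 - B*C*e^2*a*b*t - 3*B*C*e^2*b^2*s - 2*C^2*e^2*b^2*t + C*e*t) * hNp

lemma pd_contDiff (i : Fin 2) {f : (Fin 2 → ℝ) → ℝ} (hf : ContDiff ℝ (⊤ : ℕ∞) f) :
    ContDiff ℝ (⊤ : ℕ∞) (pd i f) := by
  unfold pd
  exact (hf.fderiv_right (m := (⊤ : ℕ∞)) (by simp)).clm_apply contDiff_const

lemma pd_symm (i j : Fin 2) {f : (Fin 2 → ℝ) → ℝ} (hf : ContDiff ℝ (⊤ : ℕ∞) f)
    (p : Fin 2 → ℝ) : pd i (pd j f) p = pd j (pd i f) p := by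
  have h := (hf.contDiffAt (x := p)).isSymmSndFDerivAt (by
    simp only [minSmoothness_of_isRCLikeNormedField]
    exact WithTop.coe_le_coe.2 le_top)
  have hd : DifferentiableAt ℝ (fderiv ℝ f) p :=
    ((hf.fderiv_right (m := (⊤ : ℕ∞)) (by simp)).differentiable (by simp)) p
  have hp : ∀ i j, pd i (pd j f) p
      = fderiv ℝ (fderiv ℝ f) p (Pi.single i 1) (Pi.single j 1) := by
    intro i j
    have : pd j f = fun q => fderiv ℝ f q (Pi.single j 1) := rfl
    rw [this, pd, fderiv_clm_apply hd (by fun_prop)]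
    simp
  rw [hp, hp]; exact h _ _

end helpers

theorem stmt17 (g₀ : Matrix (Fin 2) (Fin 2) ℝ) (hsym : g₀.IsSymm) (hdet : g₀.det ≠ 0)
    (ε : ℝ) (hε : ε = 1 ∨ ε = -1) (φ : (Fin 2 → ℝ) → ℝ) (hφ : ContDiff ℝ (⊤ : ℕ∞) φ)
    (hρ : ∀ p, 0 < rho g₀ ε φ p) (hmin : ∀ p, minimalAt g₀ ε φ p) :
    ∀ p : Fin 2 → ℝ, ∀ μ ν : Fin 2,
      ∑ α, pd α (fun q => ∑ β, gUp g₀ ε φ q α β *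
          ∑ γ, gUp g₀ ε φ q μ γ * pd β (fun r => gLow g₀ ε φ r γ ν) q) p = 0 := by
  intro p μ ν
  have hinv : g₀⁻¹ * g₀ = 1 := Matrix.nonsing_inv_mul _ (isUnit_iff_ne_zero.2 hdet)
  have hB : g₀⁻¹ 1 0 = g₀⁻¹ 0 1 := by
    have : (g₀⁻¹)ᵀ = g₀⁻¹ := by rw [Matrix.transpose_nonsing_inv, hsym.eq]
    exact congrFun (congrFun this 0) 1
  have e00 := congrFun (congrFun hinv 0) 0
  have e01 := congrFun (congrFun hinv 0) 1
  have e10 := congrFun (congrFun hinv 1) 0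
  have e11 := congrFun (congrFun hinv 1) 1
  simp [Matrix.mul_apply, Fin.sum_univ_two, hB] at e00 e01 e10 e11
  obtain ⟨A, hA⟩ : ∃ A, A = g₀⁻¹ 0 0 := ⟨_, rfl⟩
  obtain ⟨B, hBB⟩ : ∃ B, B = g₀⁻¹ 0 1 := ⟨_, rfl⟩
  obtain ⟨C, hC⟩ : ∃ C, C = g₀⁻¹ 1 1 := ⟨_, rfl⟩
  rw [← hBB] at hB
  rw [← hA, ← hBB] at e00 e01
  rw [← hC, ← hBB] at e10 e11
  have hrho : ∀ q, rho g₀ ε φ q = rhoP A B C ε (pd 0 φ q) (pd 1 φ q) := by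
    intro q
    simp only [rho, rhoP, Fin.sum_univ_two, hB, ← hA, ← hBB, ← hC]; ring
  have hup : ∀ q α β, hUp g₀ ε φ q α β
      = (rho g₀ ε φ q)⁻¹ * HH A B C ε (fun i => pd i φ q) α β := by
    intro q α β
    have h0 := (hρ q).ne'
    rw [eq_inv_mul_iff_mul_eq₀ h0]
    have : rho g₀ ε φ q * hUp g₀ ε φ q α β = rho g₀ ε φ q * g₀⁻¹ α β
        - ε * phiUp g₀ φ q α * phiUp g₀ φ q β := by
      unfold hUp; field_simp
    rw [this, hrho]
    fin_cases α <;> fin_cases β <;>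
      simp [phiUp, rhoP, HH, H00, H01, H11, Fin.sum_univ_two, hB, ← hA, ← hBB, ← hC] <;> ring
  have gup : ∀ q α β, gUp g₀ ε φ q α β
      = (√(rho g₀ ε φ q))⁻¹ * HH A B C ε (fun i => pd i φ q) α β := by
    intro q α β
    have : gUp g₀ ε φ q α β = √(rho g₀ ε φ q) * hUp g₀ ε φ q α β := rfl
    rw [this, hup]
    have h4 := Real.sq_sqrt (hρ q).le
    have h3 := (Real.sqrt_pos.2 (hρ q)).ne'
    have h5 : (rho g₀ ε φ q)⁻¹ = (√(rho g₀ ε φ q) ^ 2)⁻¹ := by rw [h4]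
    rw [h5]; field_simp
  have c1 : ∀ i, ContDiff ℝ (⊤ : ℕ∞) (pd i φ) := fun i => pd_contDiff i hφ
  have c2 : ∀ i j, ContDiff ℝ (⊤ : ℕ∞) (pd i (pd j φ)) := fun i j => pd_contDiff i (c1 j)
  have d1 : ∀ i, Differentiable ℝ (pd i φ) := fun i => (c1 i).differentiable (by simp)
  have d2 : ∀ i j, Differentiable ℝ (pd i (pd j φ)) := fun i j => (c2 i j).differentiable (by simp)
  have drho : ∀ q, DifferentiableAt ℝ (rho g₀ ε φ) q := by
    intro q
    have := d1 0 q
    have := d1 1 q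
    rw [funext hrho]; unfold rhoP; fun_prop
  have prho : ∀ q β, pd β (rho g₀ ε φ) q
      = 2 * rhoD A B C ε (fun i => pd i φ q) (fun i j => pd i (pd j φ) q) β := by
    intro q β
    have := d1 0 q
    have := d1 1 q
    rw [funext hrho]; unfold rhoP rhoD
    simp (disch := fun_prop) only [pd_add', pd_sub', pd_mul', pd_const']; ring
  have plow : ∀ q β γ, pd β (fun r => gLow g₀ ε φ r γ ν) q
      = (√(rho g₀ ε φ q))⁻¹ * (ε * (pd β (pd γ φ) q * pd ν φ q + pd γ φ q * pd β (pd ν φ) q))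
        - (√(rho g₀ ε φ q) ^ 3)⁻¹ *
          rhoD A B C ε (fun i => pd i φ q) (fun i j => pd i (pd j φ) q) β *
          (g₀ γ ν + ε * pd γ φ q * pd ν φ q) := by
    intro q β γ
    have h1 := d1 γ q
    have h2 := d1 ν q
    have h3 := hasDerivAt_invsqrt (hρ q)
    have h4 : DifferentiableAt ℝ (fun q => (√(rho g₀ ε φ q))⁻¹) q :=
      DifferentiableAt.comp (g := fun y => (√y)⁻¹) q h3.differentiableAt (drho q)
    unfold gLow
    rw [pd_mul' β h4 (by fun_prop), pd_comp' β (drho q) h3, prho]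
    simp (disch := fun_prop) only [pd_add', pd_mul', pd_const']; ring
  have main : ∀ q α, (∑ β, gUp g₀ ε φ q α β *
          ∑ γ, gUp g₀ ε φ q μ γ * pd β (fun r => gLow g₀ ε φ r γ ν) q)
      = (√(rhoP A B C ε (pd 0 φ q) (pd 1 φ q)) ^ 3)⁻¹ *
        KK A B C ε (fun i => pd i φ q) (fun i j => pd i (pd j φ) q) μ ν α := by
    intro q α
    have hm := HH_mul g₀ A B C ε (fun i => pd i φ q) e00 e01 e10 e11 μ ν
    simp only [← hrho] at hm ⊢
    simp only [gup, plow, KK]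
    have h4 := Real.sq_sqrt (hρ q).le
    have h3 := (Real.sqrt_pos.2 (hρ q)).ne'
    rw [← h4] at hm
    generalize √(rho g₀ ε φ q) = u at *
    rw [Finset.mul_sum]
    refine Finset.sum_congr rfl fun β _ => ?_
    generalize rhoD A B C ε (fun i => pd i φ q) (fun i j => pd i (pd j φ) q) β = ρβ
    have hm' : (if μ = ν then ρβ else 0) = (u^2)⁻¹ * ρβ * (if μ = ν then u^2 else 0) := by
      split_ifs
      · field_simp
      · simp
    rw [hm', ← hm]
    simp only [Fin.sum_univ_two]
    field_simp
    ring
  simp only [main]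
  have sy := fun q => pd_symm 1 0 hφ q
  have hvd : ∀ q, (fun i => pd i φ q) = ![pd 0 φ q, pd 1 φ q] := by
    intro q; ext i; fin_cases i <;> rfl
  have hvS : ∀ q, (fun i j => pd i (pd j φ) q) = ![![pd 0 (pd 0 φ) q, pd 0 (pd 1 φ) q],
      ![pd 0 (pd 1 φ) q, pd 1 (pd 1 φ) q]] := by
    intro q; ext i j; fin_cases i <;> fin_cases j <;> simp [sy]
  simp only [hvd, hvS, Fin.sum_univ_two]
  refine core A B C ε (pd 0 φ) (pd 1 φ) (pd 0 (pd 0 φ)) (pd 0 (pd 1 φ)) (pd 1 (pd 1 φ))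
    (d1 _) (d1 _) (d2 _ _) (d2 _ _) (d2 _ _) (fun _ => rfl) sy (fun _ => rfl) (fun _ => rfl)
    ?_ ?_ ?_ ?_ μ ν p
  · intro q
    rw [pd_symm 1 0 (c1 0), funext sy]
  · intro q
    rw [pd_symm 0 1 (c1 1)]
  · intro q; rw [← hrho]; exact hρ q
  · intro q
    have h := hmin q
    unfold minimalAt at h
    simp only [hup, pd2, Fin.sum_univ_two] at h
    have h0 := (hρ q).ne'
    have e1 : (fun q => pd 0 φ q) = pd 0 φ := rfl
    have e2 : (fun q => pd 1 φ q) = pd 1 φ := rfl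
    simp only [e1, e2, sy] at h
    simp [HH] at h
    field_simp at h
    linear_combination h
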